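/- Let Λ be a lattice in ℂ, let a ∈ ℂ with aΛ ⊆ Λ and a ≠ 1, and let b ∈ ℂ. Then the set of fixed points on the torus of the induced affine map, namely {x ∈ ℂ/Λ : a·x + [b] = x} where [b] is the class of b, is finite with exactly |a−1|² = Complex.normSq (a−1) elements. -/

import Mathlib

/-- Multiplication by `a` on the torus `ℂ/Λ`, induced when `aΛ ⊆ Λ`. -/
noncomputable def torusMul (Λ : AddSubgroup ℂ) (a : ℂ) (h : ∀ x ∈ Λ, a * x ∈ Λ) :
    ℂ ⧸ Λ →+ ℂ ⧸ Λ :=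
  QuotientAddGroup.map Λ Λ (AddMonoidHom.mulLeft a) h

/-!
A point `x` of `V / L` is fixed by `x ↦ A x + c` exactly when `(A - 1) x = -c`. If `det (A - 1) ≠ 0`
then `A - 1` acts surjectively on `V / L`, so the fixed points form a coset of its kernel
`(A - 1)⁻¹ L / L`. Applying `A - 1` turns the order of this kernel into the index of `(A - 1) L`
in `L`, which is `|det (A - 1)|`. For multiplication by `a` on `ℂ`, this determinant is the norm
of `a - 1` from `ℂ` to `ℝ`.
-/

open Module

section Groups

theorem quotientMap_sub_id {G : Type*} [AddCommGroup G] {N : AddSubgroup G} {f : G →+ G}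
    (hf : N ≤ N.comap f) (hf' : N ≤ N.comap (f - AddMonoidHom.id G)) :
    QuotientAddGroup.map N N f hf - AddMonoidHom.id (G ⧸ N) =
      QuotientAddGroup.map N N (f - AddMonoidHom.id G) hf' := by
  ext x
  rfl

theorem card_ker_quotientMap_of_bijective {G H : Type*} [AddGroup G] [AddGroup H]
    {N : AddSubgroup G} [N.Normal] {M : AddSubgroup H} [M.Normal] {f : G →+ H}
    (hf : Function.Bijective f) (h : N ≤ M.comap f) :
    Nat.card (QuotientAddGroup.map N M f h).ker = (N.map f).relIndex M := by
  calc Nat.card (QuotientAddGroup.map N M f h).ker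
      = N.relIndex (M.comap f) := by
        rw [QuotientAddGroup.ker_map, ← AddSubgroup.relIndex_ker, QuotientAddGroup.ker_mk']
    _ = (N.map f).relIndex ((M.comap f).map f) :=
        (AddSubgroup.relIndex_map_map_of_injective _ _ hf.injective).symm
    _ = (N.map f).relIndex M := by
        rw [AddSubgroup.map_comap_eq_self_of_surjective hf.surjective]

theorem card_fixedPoints_map_add_const {G : Type*} [AddCommGroup G] {φ : G →+ G}
    (hφ : Function.Surjective (φ - AddMonoidHom.id G)) (c : G) :
    Nat.card {x : G | φ x + c = x} = Nat.card (φ - AddMonoidHom.id G).ker := by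
  have fixed_eq_fiber : {x : G | φ x + c = x} = (φ - AddMonoidHom.id G) ⁻¹' {-c} := by
    ext x
    change φ x + c = x ↔ φ x - x = -c
    rw [← sub_eq_zero, ← add_eq_zero_iff_eq_neg, sub_add_eq_add_sub]
  rw [fixed_eq_fiber]
  exact Nat.card_congr (AddMonoidHom.fiberEquivKerOfSurjective hφ (-c))

end Groups

section Lattices

variable {ι R V : Type*} [AddCommGroup V]

theorem intCast_det_addSubgroupOfClosure [Fintype ι] [DecidableEq ι] [CommRing R]
    [Nontrivial R] [IsAddTorsionFree R] [Module R V] (b : Basis ι R V) {L : AddSubgroup V}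
    (hL : L = .closure (Set.range b)) (v : ι → L.toIntSubmodule) :
    ((b.addSubgroupOfClosure L hL).det v : R) = b.det fun i ↦ (v i : V) := by
  rw [Basis.det_apply, Basis.det_apply, Int.cast_det]
  congr 1
  ext i j
  exact b.addSubgroupOfClosure_repr_apply L hL (v j) i

theorem relIndex_closure_eq_abs_det [Fintype ι] [DecidableEq ι] [CommRing R] [LinearOrder R]
    [IsStrictOrderedRing R] [Module R V] (b₁ b₂ : Basis ι R V) {L₁ L₂ : AddSubgroup V}
    (hL₁ : L₁ = .closure (Set.range b₁)) (hL₂ : L₂ = .closure (Set.range b₂)) (hle : L₁ ≤ L₂) :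
    (L₁.relIndex L₂ : R) = |b₂.det b₁| := by
  rw [AddSubgroup.relIndex_eq_natAbs_det L₁ L₂ hle (b₁.addSubgroupOfClosure L₁ hL₁)
    (b₂.addSubgroupOfClosure L₂ hL₂), Nat.cast_natAbs, Int.cast_abs,
    intCast_det_addSubgroupOfClosure]
  simp only [Basis.addSubgroupOfClosure_apply]

theorem relIndex_map_eq_abs_det [Finite ι] [CommRing R] [LinearOrder R] [IsStrictOrderedRing R]
    [Module R V] (b : Basis ι R V) {L : AddSubgroup V} (hL : L = .closure (Set.range b))
    {f : V →ₗ[R] V} (hf : Function.Bijective f) (hfL : L ≤ L.comap (f : V →+ V)) :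
    ((L.map (f : V →+ V)).relIndex L : R) = |LinearMap.det f| := by
  classical
  have := Fintype.ofFinite ι
  let fb : Basis ι R V := b.map (.ofBijective f hf)
  have coe_fb : ⇑fb = f ∘ b := by
    ext i
    simp [fb]
  have map_eq_closure : L.map (f : V →+ V) = .closure (Set.range fb) := by
    rw [hL, AddMonoidHom.map_closure, coe_fb, Set.range_comp]
    rfl
  rw [relIndex_closure_eq_abs_det fb b map_eq_closure hL (AddSubgroup.map_le_iff_le_comap.2 hfL),
    coe_fb, Basis.det_comp, Basis.det_self, mul_one]

end Lattices

theorem card_affine_torus_fixed_points_general {ι K V : Type*} [Finite ι] [Field K]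
    [LinearOrder K] [IsStrictOrderedRing K] [AddCommGroup V] [Module K V] (b : Basis ι K V)
    {L : AddSubgroup V} (hL : L = .closure (Set.range b)) {A : V →ₗ[K] V}
    (hA : L ≤ L.comap (A : V →+ V)) (hdet : LinearMap.det (A - 1) ≠ 0) (c : V ⧸ L) :
    {x : V ⧸ L | QuotientAddGroup.map L L (A : V →+ V) hA x + c = x}.Finite ∧
      (Nat.card {x : V ⧸ L | QuotientAddGroup.map L L (A : V →+ V) hA x + c = x} : K) =
        |LinearMap.det (A - 1)| := by
  have := Module.Finite.of_basis b
  have bij : Function.Bijective (A - 1 : V →ₗ[K] V) :=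
    (End.isUnit_iff _).1 ((A - 1).isUnit_iff_isUnit_det.2 hdet.isUnit)
  have hA' : L ≤ L.comap ((A - 1 : V →ₗ[K] V) : V →+ V) := fun x hx ↦ L.sub_mem (hA hx) hx
  set T := QuotientAddGroup.map L L (A : V →+ V) hA
  have sub_id : T - AddMonoidHom.id (V ⧸ L) =
      QuotientAddGroup.map L L ((A - 1 : V →ₗ[K] V) : V →+ V) hA' := quotientMap_sub_id hA hA'
  have surj : Function.Surjective (T - AddMonoidHom.id (V ⧸ L)) := by
    rw [sub_id]
    exact QuotientAddGroup.map_surjective_of_surjective _ _ _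
      (QuotientAddGroup.mk_surjective.comp bij.surjective) _
  have card_eq : (Nat.card {x : V ⧸ L | T x + c = x} : K) = |LinearMap.det (A - 1)| := by
    rw [card_fixedPoints_map_add_const surj, sub_id, card_ker_quotientMap_of_bijective bij,
      relIndex_map_eq_abs_det b hL bij hA']
  refine ⟨Set.finite_coe_iff.1 (Nat.finite_of_card_ne_zero fun card_eq_zero ↦ ?_), card_eq⟩
  rw [card_eq_zero, Nat.cast_zero] at card_eq
  exact hdet (abs_eq_zero.1 card_eq.symm)

theorem exists_basis_range_eq_pair {K V : Type*} [Field K] [AddCommGroup V] [Module K V]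
    (hV : finrank K V = 2) {v w : V} (hvw : LinearIndependent K ![v, w]) :
    ∃ b : Basis (Fin 2) K V, Set.range b = {v, w} :=
  ⟨basisOfLinearIndependentOfCardEqFinrank hvw (by simp [hV]), by simp [Set.pair_comm]⟩

theorem det_lmul_complex_sub_one (a : ℂ) :
    LinearMap.det (Algebra.lmul ℝ ℂ a - 1) = Complex.normSq (a - 1) := by
  rw [← Algebra.norm_complex_apply, Algebra.norm_apply, map_sub (Algebra.lmul ℝ ℂ),
    map_one (Algebra.lmul ℝ ℂ)]

/-- if `Λ = ℤv + ℤw` is a lattice in `ℂ`, `aΛ ⊆ Λ`, `a ≠ 1`, and `b ∈ ℂ`,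
then the fixed-point set `{x ∈ ℂ/Λ : a·x + [b] = x}` of the induced affine map of the
torus is finite with exactly `|a−1|² = Complex.normSq (a−1)` elements. -/
theorem card_affine_torus_fixed_points (Λ : AddSubgroup ℂ) (v w : ℂ)
    (hindep : LinearIndependent ℝ ![v, w])
    (hΛ : Λ = AddSubgroup.closure {v, w})
    (a : ℂ) (haΛ : ∀ x ∈ Λ, a * x ∈ Λ) (ha1 : a ≠ 1) (b : ℂ) :
    {x : ℂ ⧸ Λ | torusMul Λ a haΛ x + (QuotientAddGroup.mk b : ℂ ⧸ Λ) = x}.Finite ∧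
      (Nat.card {x : ℂ ⧸ Λ | torusMul Λ a haΛ x + (QuotientAddGroup.mk b : ℂ ⧸ Λ) = x} : ℝ) =
        Complex.normSq (a - 1) := by
  obtain ⟨B, hB⟩ := exists_basis_range_eq_pair Complex.finrank_real_complex hindep
  have hdet : LinearMap.det (Algebra.lmul ℝ ℂ a - 1) ≠ 0 := by
    rwa [det_lmul_complex_sub_one, Complex.normSq_eq_zero.ne, sub_ne_zero]
  have fixed_points := card_affine_torus_fixed_points_general B (hB ▸ hΛ)
    (A := Algebra.lmul ℝ ℂ a) haΛ hdet b
  rwa [det_lmul_complex_sub_one, abs_of_nonneg (Complex.normSq_nonneg _)] at fixed_points
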